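/- Let U_1, U_2 be valuations and E an end component such that Pre(U_1) ≤ U_1 pointwise and U_2 ≤ Pre(D^{|E|}(U_1)) pointwise, where D^{|E|}(U_1) denotes the result of DEFLATE applied to U_1 on E. Then D^{|E|}(U_2) ≤ D^{|E|}(U_1) pointwise. -/

import Mathlib

/-!
The proof rests on the fact that every stage of DEFLATE preserves the inequality `Pre(v) ≤ v`.
Granting it, `D = DEFLATE(U₁, E)` satisfies `Pre(D) ≤ D`, and since DEFLATE only lowers values,
`DEFLATE(U₂, E) ≤ U₂ ≤ Pre(D) ≤ D`.

For the invariant, let `v` be the current valuation, `F` the current set, `e` its best exit, and let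
`v' ≤ v` be the updated valuation, so `v' ≤ e` on `F`. Monotonicity gives `Pre(v') ≤ Pre(v) ≤ v`, so
only `Pre(v') ≤ e` on `F` is at stake (`preR_le_of_preExit_le`). Fix a Reach strategy `σ` at `s ∈ F`.
If Safe has a response keeping the play in `F`, that response yields at most `e`. Otherwise `σ` plays
non-staying moves with some probability `p > 0`, and conditioning on them gives an exit strategy
`σ'`. Staying moves are worth at most `e`, so `σ` is worth at most `p` times the value of `σ'`
plus `(1 - p) e`, and the value of `σ'` is at most the best exit `e`.
-/

open scoped BigOperators
open Filter Topology

attribute [local instance] Classical.propDecidable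

noncomputable section

/-- A (memoryless randomized) strategy: at every state, a probability
distribution over the moves available according to `Γ`. -/
structure GStrategy (S M : Type) [Fintype S] [Fintype M] (Γ : S → Finset M) where
  prob : S → M → ℝ
  nonneg : ∀ s a, 0 ≤ prob s a
  sum_one : ∀ s, ∑ a ∈ Γ s, prob s a = 1
  supp_mem : ∀ s a, a ∉ Γ s → prob s a = 0

/-- A two-player concurrent stochastic game. -/
structure ConcurrentGame (S M : Type) [Fintype S] [Fintype M] where
  ΓR : S → Finset M
  ΓS : S → Finset M
  ΓR_ne : ∀ s, (ΓR s).Nonempty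
  ΓS_ne : ∀ s, (ΓS s).Nonempty
  δ : S → M → M → S → ℝ
  δ_nonneg : ∀ s a b s', 0 ≤ δ s a b s'
  δ_sum : ∀ s a b, ∑ s', δ s a b s' = 1

namespace ConcurrentGame

variable {S M : Type} [Fintype S] [Fintype M] (G : ConcurrentGame S M)

/-- Strategies of player Reach. -/
abbrev StratR := GStrategy S M G.ΓR
/-- Strategies of player Safe. -/
abbrev StratS := GStrategy S M G.ΓS

/-- A valuation assigns to each state a number in `[0,1]`. -/
def Valuation (v : S → ℝ) : Prop := ∀ s, v s ∈ Set.Icc (0 : ℝ) 1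

/-- Expected value `Pre_{σ,τ}(v)(s)` of valuation `v` at `s` under strategies `σ, τ`. -/
def preST (σ : G.StratR) (τ : G.StratS) (v : S → ℝ) (s : S) : ℝ :=
  ∑ a, ∑ b, ∑ s', v s' * G.δ s a b s' * σ.prob s a * τ.prob s b

/-- Bellman operator `Pre(v)(s)` for the (maximizing) reachability player. -/
def preR (v : S → ℝ) (s : S) : ℝ :=
  ⨆ σ : G.StratR, ⨅ τ : G.StratS, G.preST σ τ v s

/-- Bellman operator for the (maximizing) safety player. -/
def preS (v : S → ℝ) (s : S) : ℝ :=
  ⨆ τ : G.StratS, ⨅ σ : G.StratR, G.preST σ τ v s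

/-- `Pre_{R:σ}(v)(s)`: value with the Reach strategy fixed. -/
def preRFix (σ : G.StratR) (v : S → ℝ) (s : S) : ℝ :=
  ⨅ τ : G.StratS, G.preST σ τ v s

/-- `Pre_{S:τ}(v)(s)`: value with the Safe strategy fixed. -/
def preSFix (τ : G.StratS) (v : S → ℝ) (s : S) : ℝ :=
  ⨅ σ : G.StratR, G.preST σ τ v s

/-- Potential successors `Dest(s,a,b)`: support of `δ(s,a,b)`. -/
def Dest (s : S) (a b : M) : Set S := {s' | G.δ s a b s' ≠ 0}

/-- `Dest(s,σ,τ)`: successors under supports of the two strategies. -/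
def DestStrat (s : S) (σ : G.StratR) (τ : G.StratS) : Set S :=
  ⋃ a ∈ {a | σ.prob s a ≠ 0}, ⋃ b ∈ {b | τ.prob s b ≠ 0}, G.Dest s a b

/-- One finite-horizon step for reachability of `F` under fixed strategies. -/
def reachStep (F : Set S) (σ : G.StratR) (τ : G.StratS) (v : S → ℝ) : S → ℝ :=
  fun s => if s ∈ F then 1 else G.preST σ τ v s

/-- Probability of reaching `F` within `n` steps under `σ, τ`. -/
def reachProbN (F : Set S) (σ : G.StratR) (τ : G.StratS) (n : ℕ) : S → ℝ :=
  (G.reachStep F σ τ)^[n] (fun _ => 0)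

/-- `P^{σ,τ}_s(◇F)`: probability of eventually reaching `F`
(limit of the finite-horizon reachability probabilities). -/
def reachProb (F : Set S) (σ : G.StratR) (τ : G.StratS) (s : S) : ℝ :=
  ⨆ n, G.reachProbN F σ τ n s

/-- The reachability value `val(◇F)(s)`. -/
def reachVal (F : Set S) (s : S) : ℝ :=
  ⨆ σ : G.StratR, ⨅ τ : G.StratS, G.reachProb F σ τ s

/-- `val_{R:σ}(◇F)`: reachability value under a fixed Reach strategy. -/
def valFixR (F : Set S) (σ : G.StratR) (s : S) : ℝ :=
  ⨅ τ : G.StratS, G.reachProb F σ τ s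

/-- `val_{S:τ}(□C)` for `C = S \ F`: safety value under a fixed Safe strategy
(the complement event of `◇F`). -/
def safeValFix (F : Set S) (τ : G.StratS) (s : S) : ℝ :=
  ⨅ σ : G.StratR, (1 - G.reachProb F σ τ s)

/-- The safety value `val(□C)(s)` for `C = S \ F`. -/
def safeVal (F : Set S) (s : S) : ℝ :=
  ⨆ τ : G.StratS, G.safeValFix F τ s

/-- The sure winning region `W` of the safety player. -/
def sureWin (F : Set S) : Set S := {s | G.reachVal F s = 0}

/-- A set of states is absorbing if all transitions from it stay inside it. -/
def Absorbing (F : Set S) : Prop := ∀ s ∈ F, ∀ a b, G.Dest s a b ⊆ F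

/-- End components. -/
def IsEC (E : Set S) : Prop :=
  E.Nonempty ∧ ∃ σ : G.StratR, ∃ τ : G.StratS,
    (∀ s ∈ E, G.DestStrat s σ τ ⊆ E) ∧
    ∀ s ∈ E, ∀ s' ∈ E, ∃ n : ℕ, ∃ p : ℕ → S, p 0 = s ∧ p n = s' ∧
      (∀ i ≤ n, p i ∈ E) ∧ ∀ i < n, p (i + 1) ∈ G.DestStrat (p i) σ τ

/-- Maximal end components. -/
def IsMEC (E : Set S) : Prop :=
  G.IsEC E ∧ ∀ E', G.IsEC E' → E ⊆ E' → E' = E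

/-- A move `a` of player Reach is staying (w.r.t. `E`) at `s`. -/
def Staying (E : Set S) (s : S) (a : M) : Prop :=
  a ∈ G.ΓR s ∧ ∀ b ∈ G.ΓS s, G.Dest s a b ⊆ E

/-- `Σ^{exit(E)}_R(s)`: Reach strategies forced to leave `E` from `s`,
using no staying move. -/
def ExitStrats (E : Set S) (s : S) : Set G.StratR :=
  {σ | (∀ τ : G.StratS, ¬ G.DestStrat s σ τ ⊆ E) ∧
    ∀ a, σ.prob s a ≠ 0 → ¬ G.Staying E s a}

/-- `Pre^{exit(E)}(v)(s)`. -/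
def preExit (E : Set S) (v : S → ℝ) (s : S) : ℝ :=
  ⨆ σ : G.ExitStrats E s, ⨅ τ : G.StratS, G.preST σ.1 τ v s

/-- The best exit `bestExit_v(E)` of `E` w.r.t. valuation `v`. -/
def bestExit (E : Set S) (v : S → ℝ) : ℝ :=
  ⨆ s ∈ E, G.preExit E v s

/-- One attractor step (within `E`). -/
def attrStep (E B : Set S) : Set S :=
  B ∪ {s ∈ E | ∃ a ∈ G.ΓR s, ∀ b ∈ G.ΓS s, G.Dest s a b ⊆ B}

/-- The attractor `Attr(B)` of `B ⊆ E` within `E`. -/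
def attr (E B : Set S) : Set S := (G.attrStep E)^[Nat.card E] B

/-- The states of `E` realizing the best exit w.r.t. `v`. -/
def bestSet (E : Set S) (v : S → ℝ) : Set S :=
  {s ∈ E | G.preExit E v s = G.bestExit E v}

/-- The sequence `(D^i(v), D^i(E))` of intermediate valuations and remaining
sets of the DEFLATE procedure. -/
def deflateSeq (v : S → ℝ) (E : Set S) : ℕ → (S → ℝ) × Set S
  | 0 => (v, E)
  | i + 1 =>
    (fun s => if s ∈ (deflateSeq v E i).2 then
        min ((deflateSeq v E i).1 s)
          (G.bestExit (deflateSeq v E i).2 (deflateSeq v E i).1)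
      else (deflateSeq v E i).1 s,
     (deflateSeq v E i).2 \
       G.attr (deflateSeq v E i).2
         (G.bestSet (deflateSeq v E i).2 (deflateSeq v E i).1))

/-- `DEFLATE(v, E)`. -/
def deflate (v : S → ℝ) (E : Set S) : S → ℝ := (G.deflateSeq v E (Nat.card E)).1

/-- Apply DEFLATE on every maximal end component
(maximal end components are pairwise disjoint). -/
def deflateAll (v : S → ℝ) : S → ℝ :=
  fun s => if h : ∃ E, G.IsMEC E ∧ s ∈ E then G.deflate v h.choose s else v s

/-- One step of the bounded value iteration upper bound: apply `Pre`,
then DEFLATE every maximal end component. -/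
def bviStep (v : S → ℝ) : S → ℝ := G.deflateAll (G.preR v)

/-- The upper-bound sequence `U_k` of bounded value iteration. -/
def upperSeq (W : Set S) : ℕ → S → ℝ
  | 0 => fun s => if s ∈ W then 0 else 1
  | k + 1 => G.bviStep (upperSeq W k)

/-- The sequence `(v_i, E_i)` of the INFLATE procedure (dual of DEFLATE,
for the safety player). -/
def inflateSeq (v : S → ℝ) (E : Set S) : ℕ → (S → ℝ) × Set S
  | 0 => (v, E)
  | i + 1 =>
    (fun s => if s ∈ (inflateSeq v E i).2 then
        max ((inflateSeq v E i).1 s)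
          (1 - G.bestExit (inflateSeq v E i).2 (fun t => 1 - (inflateSeq v E i).1 t))
      else (inflateSeq v E i).1 s,
     (inflateSeq v E i).2 \
       G.attr (inflateSeq v E i).2
         (G.bestSet (inflateSeq v E i).2 (fun t => 1 - (inflateSeq v E i).1 t)))

/-- `INFLATE(v, E)`. -/
def inflate (v : S → ℝ) (E : Set S) : S → ℝ := (G.inflateSeq v E (Nat.card E)).1

end ConcurrentGame


/-! ### Strategies and conditioning -/

namespace GStrategy

variable {S M : Type} [Fintype S] [Fintype M] {Γ : S → Finset M}

lemma sum_univ (σ : GStrategy S M Γ) (s : S) : ∑ a, σ.prob s a = 1 := by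
  rw [← σ.sum_one s]
  exact (Finset.sum_subset (Finset.subset_univ _) (fun a _ ha => σ.supp_mem s a ha)).symm

lemma mem_of_ne {σ : GStrategy S M Γ} {s : S} {a : M} (h : σ.prob s a ≠ 0) : a ∈ Γ s := by
  by_contra ha
  exact h (σ.supp_mem s a ha)

lemma nonempty (h : ∀ s, (Γ s).Nonempty) : Nonempty (GStrategy S M Γ) :=
  ⟨{ prob := fun s a => if a = (h s).choose then 1 else 0
     nonneg := fun s a => by split_ifs <;> norm_num
     sum_one := fun s => by
       rw [Finset.sum_ite_eq' (Γ s), if_pos (h s).choose_spec]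
     supp_mem := fun s a ha => by
       rw [if_neg]
       rintro rfl
       exact ha (h s).choose_spec }⟩

/-- The strategy `σ` conditioned, at the single state `s`, on playing a move outside `P`;
`p > 0` is the probability of that event. At other states it plays as `σ`. -/
def condition (σ : GStrategy S M Γ) (s : S) (P : M → Prop) (p : ℝ) (hp : 0 < p)
    (hsum : ∑ a, (if P a then 0 else σ.prob s a) = p) : GStrategy S M Γ where
  prob t a := if t = s then (if P a then 0 else σ.prob s a) / p else σ.prob t a
  nonneg t a := by
    split_ifs
    · simp
    · exact div_nonneg (σ.nonneg s a) hp.le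
    · exact σ.nonneg t a
  sum_one t := by
    by_cases ht : t = s
    · subst ht
      simp only [if_true]
      rw [← Finset.sum_div, div_eq_one_iff_eq hp.ne', ← hsum]
      refine Finset.sum_subset (Finset.subset_univ _) fun a _ ha => ?_
      simp [σ.supp_mem t a ha]
    · simp only [if_neg ht]
      exact σ.sum_one t
  supp_mem t a ha := by
    by_cases ht : t = s
    · subst ht
      simp [σ.supp_mem t a ha]
    · simp only [if_neg ht]
      exact σ.supp_mem t a ha

end GStrategy

namespace ConcurrentGame

variable {S M : Type} [Fintype S] [Fintype M] (G : ConcurrentGame S M)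

/-! ### Bounds for one-step values -/

/-- Expected value of `v` after Reach plays the pure move `a` at `s` against `τ`. -/
def moveVal (τ : G.StratS) (v : S → ℝ) (s : S) (a : M) : ℝ :=
  ∑ b, ∑ s', v s' * G.δ s a b s' * τ.prob s b

lemma preST_eq (σ : G.StratR) (τ : G.StratS) (v : S → ℝ) (s : S) :
    G.preST σ τ v s = ∑ a, σ.prob s a * G.moveVal τ v s a := by
  simp only [preST, moveVal, Finset.mul_sum]
  refine Finset.sum_congr rfl fun a _ => Finset.sum_congr rfl fun b _ =>
    Finset.sum_congr rfl fun s' _ => ?_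
  ring

/-- A move is worth at most `e` if `v ≤ e` at all of its possible successors. -/
lemma moveVal_le (τ : G.StratS) {v : S → ℝ} {s : S} {a : M} {e : ℝ}
    (h : ∀ b, τ.prob s b ≠ 0 → ∀ s' ∈ G.Dest s a b, v s' ≤ e) :
    G.moveVal τ v s a ≤ e := by
  calc G.moveVal τ v s a ≤ ∑ b, ∑ s', e * G.δ s a b s' * τ.prob s b := by
        refine Finset.sum_le_sum fun b _ => Finset.sum_le_sum fun s' _ => ?_
        by_cases hb : τ.prob s b = 0
        · simp [hb]
        by_cases hd : G.δ s a b s' = 0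
        · simp [hd]
        exact mul_le_mul_of_nonneg_right
          (mul_le_mul_of_nonneg_right (h b hb s' hd) (G.δ_nonneg ..)) (τ.nonneg ..)
    _ = e := by
        simp_rw [← Finset.sum_mul, ← Finset.mul_sum, G.δ_sum, mul_one, ← Finset.mul_sum,
          τ.sum_univ, mul_one]

lemma moveVal_mono (τ : G.StratS) {v w : S → ℝ} (h : ∀ s, v s ≤ w s) (s : S) (a : M) :
    G.moveVal τ v s a ≤ G.moveVal τ w s a :=
  Finset.sum_le_sum fun _ _ => Finset.sum_le_sum fun s' _ =>
    mul_le_mul_of_nonneg_right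
      (mul_le_mul_of_nonneg_right (h s') (G.δ_nonneg ..)) (τ.nonneg ..)

lemma preST_mono (σ : G.StratR) (τ : G.StratS) {v w : S → ℝ} (h : ∀ s, v s ≤ w s) (s : S) :
    G.preST σ τ v s ≤ G.preST σ τ w s := by
  rw [preST_eq, preST_eq]
  exact Finset.sum_le_sum fun a _ =>
    mul_le_mul_of_nonneg_left (G.moveVal_mono τ h s a) (σ.nonneg s a)

lemma preST_le (σ : G.StratR) (τ : G.StratS) {v : S → ℝ} {s : S} {e : ℝ}
    (h : ∀ s' ∈ G.DestStrat s σ τ, v s' ≤ e) : G.preST σ τ v s ≤ e := by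
  rw [preST_eq]
  calc _ ≤ ∑ a, σ.prob s a * e := by
        refine Finset.sum_le_sum fun a _ => ?_
        by_cases ha : σ.prob s a = 0
        · simp [ha]
        refine mul_le_mul_of_nonneg_left (G.moveVal_le τ fun b hb s' hs' => h s' ?_) (σ.nonneg s a)
        simp only [DestStrat, Set.mem_iUnion]
        exact ⟨a, ha, b, hb, hs'⟩
    _ = e := by rw [← Finset.sum_mul, σ.sum_univ, one_mul]

lemma preST_nonneg (σ : G.StratR) (τ : G.StratS) {v : S → ℝ} (h : Valuation v) (s : S) :
    0 ≤ G.preST σ τ v s :=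
  Finset.sum_nonneg fun _ _ => Finset.sum_nonneg fun _ _ => Finset.sum_nonneg fun s' _ =>
    mul_nonneg (mul_nonneg (mul_nonneg (h s').1 (G.δ_nonneg ..)) (σ.nonneg ..)) (τ.nonneg ..)

lemma preRFix_le (σ : G.StratR) (τ : G.StratS) {v : S → ℝ} (h : Valuation v) (s : S) :
    ⨅ τ : G.StratS, G.preST σ τ v s ≤ G.preST σ τ v s :=
  ciInf_le ⟨0, by rintro _ ⟨τ, rfl⟩; exact G.preST_nonneg σ τ h s⟩ τ

lemma preRFix_le_one (σ : G.StratR) {v : S → ℝ} (h : Valuation v) (s : S) :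
    ⨅ τ : G.StratS, G.preST σ τ v s ≤ 1 :=
  let ⟨τ⟩ := GStrategy.nonempty G.ΓS_ne
  (G.preRFix_le σ τ h s).trans (G.preST_le σ τ fun s' _ => (h s').2)

lemma preR_mono {v w : S → ℝ} (hv : Valuation v) (hw : Valuation w)
    (h : ∀ s, v s ≤ w s) (s : S) : G.preR v s ≤ G.preR w s :=
  ciSup_mono ⟨1, by rintro _ ⟨σ, rfl⟩; exact G.preRFix_le_one σ hw s⟩ fun σ =>
    have := GStrategy.nonempty G.ΓS_ne
    le_ciInf fun τ => (G.preRFix_le σ τ hv s).trans (G.preST_mono σ τ h s)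

/-! ### Exits of a set -/

lemma preExit_nonneg (F : Set S) {v : S → ℝ} (hv : Valuation v) (s : S) :
    0 ≤ G.preExit F v s :=
  Real.iSup_nonneg fun σ => Real.iInf_nonneg fun τ => G.preST_nonneg σ.1 τ hv s

lemma bestExit_nonneg (F : Set S) {v : S → ℝ} (hv : Valuation v) :
    0 ≤ G.bestExit F v :=
  Real.iSup_nonneg fun s => Real.iSup_nonneg fun _ => G.preExit_nonneg F hv s

lemma preExit_le_bestExit (F : Set S) (v : S → ℝ) {s : S} (hs : s ∈ F) :
    G.preExit F v s ≤ G.bestExit F v := by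
  have := le_ciSup (f := fun s => ⨆ _ : s ∈ F, G.preExit F v s) (Set.finite_range _).bddAbove s
  rwa [ciSup_pos hs] at this

/-- If `v' ≤ v`, if `v' ≤ e` on `F`, and if no exit strategy of `F` at `s` guarantees more than `e`
with respect to `v`, then Reach has no strategy at all at `s` guaranteeing more than `e` with
respect to `v'`. -/
lemma preR_le_of_preExit_le {F : Set S} {v v' : S → ℝ} {e : ℝ} {s : S}
    (hv : Valuation v) (hv' : Valuation v') (hle : ∀ t, v' t ≤ v t)
    (he : 0 ≤ e) (hF : ∀ t ∈ F, v' t ≤ e) (hexit : G.preExit F v s ≤ e) :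
    G.preR v' s ≤ e := by
  refine Real.iSup_le (fun σ => ?_) he
  have hne : Nonempty G.StratS := GStrategy.nonempty G.ΓS_ne
  by_cases hstay : ∃ τ : G.StratS, G.DestStrat s σ τ ⊆ F
  · obtain ⟨τ, hτ⟩ := hstay
    exact (G.preRFix_le σ τ hv' s).trans (G.preST_le σ τ fun s' hs' => hF s' (hτ hs'))
  push Not at hstay
  have hnn : ∀ a ∈ Finset.univ, 0 ≤ (if G.Staying F s a then 0 else σ.prob s a) := by
    intro a _
    split_ifs
    exacts [le_rfl, σ.nonneg s a]
  obtain ⟨p, hsum⟩ : ∃ p, ∑ a, (if G.Staying F s a then 0 else σ.prob s a) = p := ⟨_, rfl⟩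
  have hp0 : 0 ≤ p := hsum ▸ Finset.sum_nonneg hnn
  -- If no non-staying move had positive probability, every response of Safe would stay in `F`.
  have hp : 0 < p := by
    refine lt_of_le_of_ne hp0 fun h0 => ?_
    rw [← h0, Finset.sum_eq_zero_iff_of_nonneg hnn] at hsum
    obtain ⟨τ⟩ := hne
    refine hstay τ fun s' hs' => ?_
    simp only [DestStrat, Set.mem_iUnion] at hs'
    obtain ⟨a, ha, b, hb, hd⟩ := hs'
    have hst : G.Staying F s a := by
      by_contra hst
      exact ha (by simpa [hst] using hsum a (Finset.mem_univ a))
    exact hst.2 b (GStrategy.mem_of_ne hb) hd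
  let σ' : G.StratR := σ.condition s (G.Staying F s) p hp hsum
  have hσ' : ∀ a, σ'.prob s a = (if G.Staying F s a then 0 else σ.prob s a) / p :=
    fun a => if_pos rfl
  have hmem : σ' ∈ G.ExitStrats F s := by
    refine ⟨fun τ hτ => hstay τ fun s' hs' => ?_, fun a ha hst => ha (by simp [hσ', hst])⟩
    simp only [DestStrat, Set.mem_iUnion] at hs'
    obtain ⟨a, ha, b, hb, hd⟩ := hs'
    by_cases hst : G.Staying F s a
    · exact hst.2 b (GStrategy.mem_of_ne hb) hd
    · apply hτ
      simp only [DestStrat, Set.mem_iUnion]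
      refine ⟨a, ?_, b, hb, hd⟩
      change σ'.prob s a ≠ 0
      rw [hσ', if_neg hst]
      exact div_ne_zero ha hp.ne'
  have hval : ⨅ τ : G.StratS, G.preST σ' τ v s ≤ e := by
    refine le_trans ?_ hexit
    exact le_ciSup (f := fun σ : G.ExitStrats F s => ⨅ τ : G.StratS, G.preST σ.1 τ v s)
      ⟨1, by rintro _ ⟨σ, rfl⟩; exact G.preRFix_le_one σ.1 hv s⟩ ⟨σ', hmem⟩
  have hmix : ∀ τ : G.StratS, G.preST σ τ v' s ≤ p * G.preST σ' τ v s + (1 - p) * e := by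
    intro τ
    have hterm : ∀ a, σ.prob s a * G.moveVal τ v' s a ≤
        p * (σ'.prob s a * G.moveVal τ v s a) + (σ.prob s a - p * σ'.prob s a) * e := by
      intro a
      rw [← mul_assoc, hσ', mul_div_cancel₀ _ hp.ne']
      by_cases hst : G.Staying F s a
      · have : G.moveVal τ v' s a ≤ e := G.moveVal_le τ fun b hb s' hs' =>
          hF s' (hst.2 b (GStrategy.mem_of_ne hb) hs')
        simpa [hst] using mul_le_mul_of_nonneg_left this (σ.nonneg s a)
      · simpa [hst] using mul_le_mul_of_nonneg_left (G.moveVal_mono τ hle s a) (σ.nonneg s a)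
    rw [preST_eq, preST_eq]
    refine (Finset.sum_le_sum fun a _ => hterm a).trans_eq ?_
    rw [Finset.sum_add_distrib, ← Finset.mul_sum, ← Finset.sum_mul, Finset.sum_sub_distrib,
      ← Finset.mul_sum, σ.sum_univ, σ'.sum_univ, mul_one]
  have hdiv : ((⨅ τ : G.StratS, G.preST σ τ v' s) - (1 - p) * e) / p ≤ e := by
    refine le_trans (le_ciInf fun τ => ?_) hval
    rw [div_le_iff₀ hp]
    linarith [hmix τ, G.preRFix_le σ τ hv' s]
  rw [div_le_iff₀ hp] at hdiv
  linarith

/-! ### The stages of DEFLATE -/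

lemma deflateSeq_le (v : S → ℝ) (E : Set S) (i : ℕ) (s : S) :
    (G.deflateSeq v E i).1 s ≤ v s := by
  induction i with
  | zero => exact le_rfl
  | succ i ih =>
    simp only [deflateSeq]
    split_ifs
    exacts [(min_le_left _ _).trans ih, ih]

/-- The property of being a valuation with `Pre(v) ≤ v` is invariant under the stages of DEFLATE. -/
lemma deflateSeq_invariant {v : S → ℝ} (hv : Valuation v) (h : ∀ s, G.preR v s ≤ v s)
    (E : Set S) (i : ℕ) :
    Valuation (G.deflateSeq v E i).1 ∧
      ∀ s, G.preR (G.deflateSeq v E i).1 s ≤ (G.deflateSeq v E i).1 s := by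
  induction i with
  | zero => exact ⟨hv, h⟩
  | succ i ih =>
    obtain ⟨hw, hpre⟩ := ih
    have he := G.bestExit_nonneg (G.deflateSeq v E i).2 hw
    have hle : ∀ s, (G.deflateSeq v E (i + 1)).1 s ≤ (G.deflateSeq v E i).1 s := by
      intro s
      simp only [deflateSeq]
      split_ifs
      exacts [min_le_left _ _, le_rfl]
    have hw' : Valuation (G.deflateSeq v E (i + 1)).1 := by
      refine fun s => ⟨?_, (hle s).trans (hw s).2⟩
      simp only [deflateSeq]
      split_ifs
      exacts [le_min (hw s).1 he, (hw s).1]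
    refine ⟨hw', fun s => ?_⟩
    have hold := (G.preR_mono hw' hw hle s).trans (hpre s)
    by_cases hs : s ∈ (G.deflateSeq v E i).2
    · have hnew : G.preR (G.deflateSeq v E (i + 1)).1 s ≤
          G.bestExit (G.deflateSeq v E i).2 (G.deflateSeq v E i).1 := by
        refine G.preR_le_of_preExit_le hw hw' hle he (fun t ht => ?_)
          (G.preExit_le_bestExit _ _ hs)
        simp only [deflateSeq, if_pos ht]
        exact min_le_right _ _
      refine (le_min hold hnew).trans_eq ?_
      simp only [deflateSeq, if_pos hs]
    · refine hold.trans_eq ?_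
      simp only [deflateSeq, if_neg hs]

end ConcurrentGame

/-- Monotonicity of DEFLATE: if `Pre(U_1) ≤ U_1` and
`U_2 ≤ Pre(DEFLATE(U_1, E))`, then `DEFLATE(U_2, E) ≤ DEFLATE(U_1, E)` pointwise. -/
theorem deflate_monotone {S M : Type} [Fintype S] [Fintype M] (G : ConcurrentGame S M)
    (E : Set S) (hE : G.IsEC E)
    (U1 U2 : S → ℝ) (hU1 : ConcurrentGame.Valuation U1) (hU2 : ConcurrentGame.Valuation U2)
    (h1 : ∀ s, G.preR U1 s ≤ U1 s)
    (h2 : ∀ s, U2 s ≤ G.preR (G.deflate U1 E) s) :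
    ∀ s, G.deflate U2 E s ≤ G.deflate U1 E s := by
  intro s
  exact (G.deflateSeq_le U2 E _ s).trans
    ((h2 s).trans ((G.deflateSeq_invariant hU1 h1 E (Nat.card E)).2 s))
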